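/- arXiv:2205.03581 — 2 statements merged into one kernel-verified Lean document; each statement's English description precedes it below -/
import Mathlib

section
/- Let A be a complex unital Banach algebra and a ∈ A. Then a is ag-Drazin invertible if and only if there exists an idempotent p in the double commutant of a (i.e., p commutes with every element of A that commutes with a) such that a + p is invertible in A and ap ∈ A^acc. -/
open Filter Topology

/-- An element of a complex Banach algebra is quasinilpotent if its spectrum is `{0}`. -/
def IsQuasinilpotent {A : Type*} [NormedRing A] [NormedAlgebra ℂ A] (b : A) : Prop :=
  spectrum ℂ b = {0}

/-- `a` is generalized Drazin invertible. -/
def IsGDrazinInv {A : Type*} [NormedRing A] [NormedAlgebra ℂ A] (a : A) : Prop :=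
  ∃ x : A, a * x = x * a ∧ x * a * x = x ∧ IsQuasinilpotent (a - a ^ 2 * x)

/-- `a ∈ A^acc`: `a - λ1` is generalized Drazin invertible for all nonzero `λ`. -/
def MemAcc {A : Type*} [NormedRing A] [NormedAlgebra ℂ A] (a : A) : Prop :=
  ∀ l : ℂ, l ≠ 0 → IsGDrazinInv (a - l • (1 : A))

/-- `x` is an ag-Drazin inverse of `a`. -/
def IsAgDrazinInverseOf {A : Type*} [NormedRing A] [NormedAlgebra ℂ A] (x a : A) : Prop :=
  a * x = x * a ∧ x * a * x = x ∧ MemAcc (a - a ^ 2 * x)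

/-- `a` is ag-Drazin invertible. -/
def IsAgDrazinInv {A : Type*} [NormedRing A] [NormedAlgebra ℂ A] (a : A) : Prop :=
  ∃ x : A, IsAgDrazinInverseOf x a

/-- The generalized Drazin spectrum. -/
def gDrazinSpectrum {A : Type*} [NormedRing A] [NormedAlgebra ℂ A] (a : A) : Set ℂ :=
  {l : ℂ | ¬ IsGDrazinInv (a - l • (1 : A))}

/-- The ag-Drazin spectrum. -/
def agDrazinSpectrum {A : Type*} [NormedRing A] [NormedAlgebra ℂ A] (a : A) : Set ℂ :=
  {l : ℂ | ¬ IsAgDrazinInv (a - l • (1 : A))}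

/-!
If `x` is an ag-Drazin inverse of `a`, the idempotent `p₀ = 1 - a * x` commutes with `a` but need
not lie in the double commutant of `a`; it has to be shrunk. Choose `r > 0` such that `a - μ` is
invertible on the corner of `1 - p₀` whenever `|μ| < r`. The spectral points of `a * p₀` of
modulus at least `r` are isolated, hence finite in number, and removing the corresponding
quasinilpotent corners leaves an idempotent `p ≤ p₀` such that the spectrum of `a` on the corner
of `p` lies in `|μ| < r` and the spectrum of `a` on the corner of `1 - p` lies in `|μ| ≥ r`. Let
`x` now be the inverse of `a` on the corner of `1 - p`, and let `y` commute with `a`. Then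
`z = p * y * (1 - p)` satisfies `z = (a * p) ^ n * z * x ^ n` for all `n`, so `z = 0` because the
spectral radii of `a * p` and `x` have product less than `1`. The same argument gives
`(1 - p) * y * p = 0`, so `p` commutes with `y`.
-/

open scoped NNReal ENNReal

section Ring

variable {A : Type*} [Ring A] {a b e u v : A}

/-- `a` is invertible on the corner of the idempotent `v`: when `a` commutes with `v`, this says
that `a * v` is a unit of the corner ring `v A v`, expressed in `A` by completing `a * v` with the
unit `1 - v` of the complementary corner. -/
def IsUnitOn (a v : A) : Prop :=
  IsUnit (a * v + (1 - v))

theorem isUnitOn_one : IsUnitOn a 1 ↔ IsUnit a := by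
  simp [IsUnitOn]

theorem isUnitOn_congr (h : a * v = b * v) : IsUnitOn a v ↔ IsUnitOn b v := by
  rw [IsUnitOn, IsUnitOn, h]

theorem add_one_sub_mul_add_one_sub {c d : A} (hv : IsIdempotentElem v) (hc : c * v = c)
    (hd : v * d = d) : (c + (1 - v)) * (d + (1 - v)) = c * d + (1 - v) := by
  rw [add_mul, mul_add, mul_add, hv.one_sub.eq, mul_one_sub, hc, sub_self, one_sub_mul, hd,
    sub_self, add_zero, zero_add]

theorem isUnitOn_of_mul_eq {x : A} (hv : IsIdempotentElem v) (hax : Commute a x)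
    (h : a * x = v) : IsUnitOn a v := by
  have hav : Commute a v := h ▸ (Commute.refl a).mul_right hax
  have hxv : Commute x v := h ▸ hax.symm.mul_right (Commute.refl x)
  have hinv : a * v * (x * v) = v := by rw [hxv.symm.mul_mul_mul_comm, h, hv.eq, hv.eq]
  have hcomm : Commute (a * v) (x * v) :=
    (hax.mul_left hxv.symm).mul_right (hav.mul_left (Commute.refl v))
  have hright (c : A) : c * v * v = c * v := by rw [mul_assoc, hv.eq]
  refine ⟨⟨a * v + (1 - v), x * v + (1 - v), ?_, ?_⟩, rfl⟩
  · rw [add_one_sub_mul_add_one_sub hv (hright a) (by rw [hxv.eq, ← mul_assoc, hv.eq]), hinv,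
      add_sub_cancel]
  · rw [add_one_sub_mul_add_one_sub hv (hright x) (by rw [hav.eq, ← mul_assoc, hv.eq]),
      ← hcomm.eq, hinv, add_sub_cancel]

theorem IsUnitOn.exists_inverse (h : IsUnitOn a v) (hv : IsIdempotentElem v) (hav : Commute a v) :
    ∃ x, Commute a x ∧ a * x = v ∧ x * v = x := by
  obtain ⟨w, hw⟩ := h
  have haw : Commute a w := by
    rw [hw]
    exact ((Commute.refl a).mul_right hav).add_right ((Commute.one_right a).sub_right hav)
  refine ⟨↑w⁻¹ * v, haw.units_inv_right.mul_right hav, ?_, by rw [mul_assoc, hv.eq]⟩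
  have hwv : a * v = w * v := by rw [hw, add_mul, mul_assoc, hv.eq, hv.one_sub_mul_self, add_zero]
  rw [← mul_assoc, haw.units_inv_right.eq, mul_assoc, hwv, w.inv_mul_cancel_left]

theorem isUnitOn_of_isUnit (hu : IsUnit u) (he : IsIdempotentElem e) (hue : Commute u e) :
    IsUnitOn u e := by
  obtain ⟨w, rfl⟩ := hu
  refine isUnitOn_of_mul_eq he ((Commute.refl _).units_inv_right.mul_right hue) ?_
  exact w.mul_inv_cancel_left e

theorem IsUnitOn.mul_idem (h : IsUnitOn a v) (he : IsIdempotentElem e) (hae : Commute a e)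
    (hve : Commute v e) : IsUnitOn a (v * e) := by
  have hunit : IsUnitOn (a * v + (1 - v)) e :=
    isUnitOn_of_isUnit h he ((hae.mul_left hve).add_left ((Commute.one_left e).sub_left hve))
  have hcorner : a * (v * e) + (1 - v * e) = (a * v + (1 - v)) * e + (1 - e) := by noncomm_ring
  rwa [IsUnitOn, hcorner]

theorem IsUnitOn.mul (ha : IsUnitOn a v) (hb : IsUnitOn b v) (hv : IsIdempotentElem v)
    (hbv : Commute b v) : IsUnitOn (a * b) v := by
  have hvb : v * (b * v) = b * v := by rw [hbv.eq, ← mul_assoc, hv.eq]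
  have hfactor : a * b * v + (1 - v) = (a * v + (1 - v)) * (b * v + (1 - v)) := by
    rw [add_one_sub_mul_add_one_sub hv (by rw [mul_assoc, hv.eq]) hvb, mul_assoc, mul_assoc, hvb]
  rw [IsUnitOn, hfactor]
  exact IsUnit.mul ha hb

theorem IsUnitOn.add (hu : IsUnitOn a u) (hv : IsUnitOn a v) (huv : u * v = 0)
    (hau : Commute a u) : IsUnitOn a (u + v) := by
  have huav : u * (a * v) = 0 := by rw [← mul_assoc, ← hau.eq, mul_assoc, huv, mul_zero]
  have hfactor : a * (u + v) + (1 - (u + v)) = (a * u + (1 - u)) * (a * v + (1 - v)) := by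
    calc a * (u + v) + (1 - (u + v))
        = (a * u + (1 - u)) * (a * v + (1 - v))
          + (a * (u * v) - u * v - a * (u * (a * v)) + u * (a * v)) := by noncomm_ring
      _ = (a * u + (1 - u)) * (a * v + (1 - v)) := by simp only [huv, huav, mul_zero]; abel
  rw [IsUnitOn, hfactor]
  exact IsUnit.mul hu hv

theorem IsUnitOn.one_sub_mul {q f : A} (hf : IsUnitOn a (1 - f)) (hqf : IsUnitOn a ((1 - q) * f))
    (hf_idem : IsIdempotentElem f) (haf : Commute a f) (hfq : Commute f q) :
    IsUnitOn a (1 - q * f) := by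
  have horth : (1 - f) * ((1 - q) * f) = 0 := by
    rw [((Commute.one_left f).sub_left hfq.symm).eq, ← mul_assoc, hf_idem.one_sub_mul_self,
      zero_mul]
  have hsum : 1 - q * f = (1 - f) + (1 - q) * f := by noncomm_ring
  rw [hsum]
  exact hf.add hqf horth ((Commute.one_right a).sub_right haf)

theorem IsUnitOn.isUnit {p : A} (h : IsUnitOn a p) (h' : IsUnitOn a (1 - p))
    (hp : IsIdempotentElem p) (hap : Commute a p) : IsUnit a := by
  rw [← isUnitOn_one, ← add_sub_cancel p 1]
  exact h.add h' hp.mul_one_sub_self hap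

theorem isUnit_add_idem_iff {p : A} (hp : IsIdempotentElem p) (hap : Commute a p) :
    IsUnit (a + p) ↔ IsUnitOn (a + 1) p ∧ IsUnitOn a (1 - p) := by
  have hcomm : Commute (a + p) p := hap.add_left (Commute.refl p)
  have hon : (a + p) * p = (a + 1) * p := by rw [add_mul, add_mul, hp.eq, one_mul]
  have hoff : (a + p) * (1 - p) = a * (1 - p) := by rw [add_mul, hp.mul_one_sub_self, add_zero]
  rw [← isUnitOn_congr hon, ← isUnitOn_congr hoff]
  refine ⟨fun h ↦ ⟨isUnitOn_of_isUnit h hp hcomm, ?_⟩, fun h ↦ h.1.isUnit h.2 hp hcomm⟩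
  exact isUnitOn_of_isUnit h hp.one_sub ((Commute.one_right _).sub_right hcomm)

/- `x` and `p` correspond through `p = 1 - a * x`. -/
theorem exists_outer_inverse_iff_exists_idem (P : A → Prop) :
    (∃ x, a * x = x * a ∧ x * a * x = x ∧ P (a - a ^ 2 * x)) ↔
      ∃ p, IsIdempotentElem p ∧ Commute a p ∧ IsUnitOn a (1 - p) ∧ P (a * p) := by
  have hresidue (x : A) : a - a ^ 2 * x = a * (1 - a * x) := by noncomm_ring
  constructor
  · rintro ⟨x, hax, hxax, hP⟩
    have hidem : IsIdempotentElem (a * x) := by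
      rw [IsIdempotentElem, mul_assoc, ← mul_assoc x, hxax]
    refine ⟨1 - a * x, hidem.one_sub, ?_, ?_, hresidue x ▸ hP⟩
    · exact (Commute.one_right a).sub_right ((Commute.refl a).mul_right hax)
    · rw [sub_sub_cancel]
      exact isUnitOn_of_mul_eq hidem hax rfl
  · rintro ⟨p, hp, hap, hunit, hP⟩
    obtain ⟨x, hax, hmul, hxp⟩ :=
      hunit.exists_inverse hp.one_sub ((Commute.one_right a).sub_right hap)
    refine ⟨x, hax, by rw [mul_assoc, hmul, hxp], ?_⟩
    rwa [hresidue, hmul, sub_sub_cancel]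

end Ring

section Algebra

variable {𝕜 A : Type*} [Field 𝕜] [Ring A] [Algebra 𝕜 A] {a v y : A} {μ : 𝕜}

theorem mem_spectrum_iff_not_isUnit_sub_smul_one :
    μ ∈ spectrum 𝕜 a ↔ ¬IsUnit (a - μ • (1 : A)) := by
  rw [spectrum.mem_iff, Algebra.algebraMap_eq_smul_one, IsUnit.sub_iff]

theorem commute_sub_smul_one (h : Commute a y) (μ : 𝕜) : Commute (a - μ • (1 : A)) y :=
  h.sub_left ((Commute.one_left y).smul_left μ)

theorem mul_sub_smul_one_mul_eq {w : A} (hvw : v * w = w) (a : A) (μ : 𝕜) :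
    (a * v - μ • (1 : A)) * w = (a - μ • (1 : A)) * w := by
  rw [sub_mul, sub_mul, mul_assoc, hvw]

theorem isUnitOn_mul_sub_smul_one (hμ : μ ≠ 0) (hv : IsIdempotentElem v) (a : A) :
    IsUnitOn (a * v - μ • (1 : A)) (1 - v) := by
  have hscalar : (a * v - μ • (1 : A)) * (1 - v) = (-μ • (1 : A)) * (1 - v) := by
    rw [sub_mul, mul_assoc, hv.mul_one_sub_self, mul_zero, zero_sub, neg_smul, neg_mul]
  have hunit : IsUnit (-μ • (1 : A)) := by
    rw [← Algebra.algebraMap_eq_smul_one]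
    exact (neg_ne_zero.2 hμ).isUnit.map (algebraMap 𝕜 A)
  rw [isUnitOn_congr hscalar]
  exact isUnitOn_of_isUnit hunit hv.one_sub ((Commute.one_left _).smul_left _)

theorem isUnit_mul_sub_smul_one_iff (hμ : μ ≠ 0) (hv : IsIdempotentElem v) (hav : Commute a v) :
    IsUnit (a * v - μ • (1 : A)) ↔ IsUnitOn (a - μ • (1 : A)) v := by
  have hcomm : Commute (a * v - μ • (1 : A)) v :=
    commute_sub_smul_one (hav.mul_left (Commute.refl v)) μ
  rw [← isUnitOn_congr (mul_sub_smul_one_mul_eq hv.eq a μ)]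
  exact ⟨fun h ↦ isUnitOn_of_isUnit h hv hcomm,
    fun h ↦ h.isUnit (isUnitOn_mul_sub_smul_one hμ hv a) hv hcomm⟩

theorem isUnitOn_sub_smul_one_one_sub_mul {e p : A} (hp : IsIdempotentElem p) (hap : Commute a p)
    (hep : Commute e p) (hoff : IsUnitOn (a - μ • (1 : A)) (1 - p))
    (hon : IsUnitOn (a * p - μ • (1 : A)) (1 - e)) : IsUnitOn (a - μ • (1 : A)) (1 - e * p) := by
  have hep' : Commute (1 - e) p := (Commute.one_left p).sub_left hep
  have hcorner : p * ((1 - e) * p) = (1 - e) * p := by rw [hep'.eq, ← mul_assoc, hp.eq]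
  refine hoff.one_sub_mul ?_ hp (commute_sub_smul_one hap μ) hep.symm
  rw [← isUnitOn_congr (mul_sub_smul_one_mul_eq hcorner a μ)]
  exact hon.mul_idem hp (commute_sub_smul_one (hap.mul_left (Commute.refl p)) μ) hep'

end Algebra

section NormedAlgebra

variable {𝕜 A : Type*} [NormedField 𝕜] [NormedRing A] [NormedAlgebra 𝕜 A] {a v : A}

theorem IsUnitOn.exists_forall_nnnorm_lt [CompleteSpace A] (h : IsUnitOn a v) :
    ∃ r : ℝ≥0, 0 < r ∧ r ≤ 1 ∧ ∀ μ : 𝕜, ‖μ‖₊ < r → IsUnitOn (a - μ • (1 : A)) v := by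
  have hcont : Continuous fun μ : 𝕜 ↦ (a - μ • (1 : A)) * v + (1 - v) := by fun_prop
  have hnear : ∀ᶠ μ : 𝕜 in 𝓝 0, IsUnitOn (a - μ • (1 : A)) v :=
    hcont.continuousAt.eventually_mem (Units.isOpen.mem_nhds (by simpa [IsUnitOn] using h))
  obtain ⟨ε, hε, hball⟩ := Metric.eventually_nhds_iff.1 hnear
  lift ε to ℝ≥0 using hε.le
  refine ⟨min ε 1, lt_min (mod_cast hε) one_pos, min_le_right _ _, fun μ hμ ↦ hball ?_⟩
  rw [dist_zero_right]
  exact_mod_cast hμ.trans_le (min_le_left _ _)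

theorem spectralRadius_le_inv_of_isUnitOn {x : A} {r : ℝ≥0} (hv : IsIdempotentElem v)
    (hax : Commute a x) (hmul : a * x = v) (hxv : x * v = x)
    (h : ∀ μ : 𝕜, ‖μ‖₊ < r → IsUnitOn (a - μ • (1 : A)) v) :
    spectralRadius 𝕜 x ≤ (r : ℝ≥0∞)⁻¹ := by
  refine iSup₂_le fun ν hν ↦ ?_
  by_contra! hlt
  have hν0 : ν ≠ 0 := by
    rintro rfl
    simp at hlt
  have hνr : ‖ν⁻¹‖₊ < r := by
    rw [nnnorm_inv, ← ENNReal.coe_lt_coe, ENNReal.coe_inv (nnnorm_ne_zero_iff.2 hν0)]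
    exact ENNReal.inv_lt_iff_inv_lt.1 hlt
  have hav : Commute a v := hmul ▸ (Commute.refl a).mul_right hax
  have hx : IsUnitOn (-ν • x) v := by
    refine isUnitOn_of_mul_eq (x := (-ν)⁻¹ • a) hv ((hax.symm.smul_left _).smul_right _) ?_
    rw [smul_mul_smul_comm, mul_inv_cancel₀ (neg_ne_zero.2 hν0), one_smul, ← hax.eq, hmul]
  have hfactor : -ν • x * (a - ν⁻¹ • (1 : A)) * v = (x - ν • (1 : A)) * v := by
    rw [mul_sub, smul_mul_smul_comm, mul_one, smul_mul_assoc, ← hax.eq, hmul, neg_mul,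
      mul_inv_cancel₀ hν0, sub_mul, sub_mul, smul_mul_assoc, smul_mul_assoc, smul_mul_assoc,
      one_mul, hv.eq]
    module
  refine mem_spectrum_iff_not_isUnit_sub_smul_one.1 hν ?_
  rw [← hxv, isUnit_mul_sub_smul_one_iff hν0 hv (hmul ▸ hax.symm.mul_right (Commute.refl x)),
    ← isUnitOn_congr hfactor]
  exact hx.mul (h ν⁻¹ hνr) hv (commute_sub_smul_one hav ν⁻¹)

theorem isUnitOn_add_one_of_spectralRadius_lt_one (hv : IsIdempotentElem v)
    (hav : Commute a v) (h : spectralRadius 𝕜 (a * v) < 1) : IsUnitOn (a + 1) v := by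
  have hunit : IsUnit (a * v - (-1 : 𝕜) • (1 : A)) := by
    by_contra hmem
    exact mem_spectrum_iff_not_isUnit_sub_smul_one.2 hmem
      (spectrum.mem_resolventSet_of_spectralRadius_lt (by simpa using h))
  simpa using (isUnit_mul_sub_smul_one_iff (by simp) hv hav).1 hunit

variable (𝕜) in
theorem spectralRadius_ne_top [CompleteSpace A] (a : A) : spectralRadius 𝕜 a ≠ ∞ := by
  refine ne_top_of_le_ne_top (ENNReal.coe_ne_top (r := ‖a‖₊ * ‖(1 : A)‖₊)) (iSup₂_le fun k hk ↦ ?_)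
  exact_mod_cast spectrum.norm_le_norm_mul_of_mem hk

end NormedAlgebra

section Bicommutant

theorem eq_pow_mul_mul_pow_of_eq_mul_mul {M : Type*} [Monoid M] {b c z : M}
    (h : z = b * z * c) (n : ℕ) : z = b ^ n * z * c ^ n := by
  induction n with
  | zero => simp
  | succ n ih =>
    calc z = b ^ n * (b * z * c) * c ^ n := by rw [← h, ← ih]
      _ = b ^ (n + 1) * z * c ^ (n + 1) := by rw [pow_succ, pow_succ']; simp only [mul_assoc]

variable {A : Type*} [NormedRing A] [NormedAlgebra ℂ A] [CompleteSpace A]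

theorem exists_norm_pow_mul_norm_pow_lt_one {b c : A}
    (h : spectralRadius ℂ b * spectralRadius ℂ c < 1) : ∃ n : ℕ, ‖b ^ n‖ * ‖c ^ n‖ < 1 := by
  have hlim := ENNReal.Tendsto.mul
    (spectrum.pow_nnnorm_pow_one_div_tendsto_nhds_spectralRadius b)
    (Or.inr (spectralRadius_ne_top ℂ c))
    (spectrum.pow_nnnorm_pow_one_div_tendsto_nhds_spectralRadius c)
    (Or.inr (spectralRadius_ne_top ℂ b))
  obtain ⟨n, hlt, hn⟩ := ((hlim.eventually (gt_mem_nhds h)).and (eventually_gt_atTop 0)).exists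
  refine ⟨n, ?_⟩
  rw [← ENNReal.mul_rpow_of_nonneg _ _ (by positivity)] at hlt
  have hprod : (‖b ^ n‖₊ * ‖c ^ n‖₊ : ℝ≥0∞) < 1 := by
    contrapose! hlt
    exact ENNReal.one_le_rpow hlt (by positivity)
  exact_mod_cast hprod

theorem eq_zero_of_eq_mul_mul {b c z : A} (hbc : spectralRadius ℂ b * spectralRadius ℂ c < 1)
    (h : z = b * z * c) : z = 0 := by
  obtain ⟨n, hn⟩ := exists_norm_pow_mul_norm_pow_lt_one hbc
  by_contra hz
  have hcontract : ‖z‖ < ‖z‖ := by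
    calc ‖z‖ = ‖b ^ n * z * c ^ n‖ := by rw [← eq_pow_mul_mul_pow_of_eq_mul_mul h n]
      _ ≤ ‖b ^ n‖ * ‖z‖ * ‖c ^ n‖ := norm_mul₃_le
      _ = ‖b ^ n‖ * ‖c ^ n‖ * ‖z‖ := by ring
      _ < ‖z‖ := mul_lt_of_lt_one_left (norm_pos_iff.2 hz) hn
  exact hcontract.false

theorem commute_of_mul_mul_one_sub_eq_zero {R : Type*} [Ring R] {p y : R}
    (h : p * y * (1 - p) = 0) (h' : (1 - p) * y * p = 0) : Commute p y := by
  rw [mul_one_sub, sub_eq_zero] at h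
  rw [one_sub_mul, sub_mul, sub_eq_zero] at h'
  exact h.trans h'.symm

theorem commute_idem_of_spectralRadius_lt {a p y : A} {r : ℝ≥0} (hp : IsIdempotentElem p)
    (hap : Commute a p) (hsmall : spectralRadius ℂ (a * p) < r)
    (hlarge : ∀ μ : ℂ, ‖μ‖₊ < r → IsUnitOn (a - μ • (1 : A)) (1 - p)) (hay : Commute a y) :
    Commute p y := by
  have hr : 0 < r := by exact_mod_cast (zero_le (a := spectralRadius ℂ (a * p))).trans_lt hsmall
  have hunit : IsUnitOn a (1 - p) := by simpa using hlarge 0 (by simpa using hr)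
  obtain ⟨x, hax, hmul, hxp⟩ :=
    hunit.exists_inverse hp.one_sub ((Commute.one_right a).sub_right hap)
  have hpx : (1 - p) * x = x := by
    rw [← hmul, hax.eq, mul_assoc, hmul, hxp]
  have hradius : spectralRadius ℂ (a * p) * spectralRadius ℂ x < 1 := by
    calc spectralRadius ℂ (a * p) * spectralRadius ℂ x
        ≤ spectralRadius ℂ (a * p) * (r : ℝ≥0∞)⁻¹ := by
          gcongr
          exact spectralRadius_le_inv_of_isUnitOn hp.one_sub hax hmul hxp hlarge
      _ < 1 := by
        rw [← div_eq_mul_inv]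
        exact ENNReal.div_lt_of_lt_mul (by rwa [one_mul])
  have hradius' : spectralRadius ℂ x * spectralRadius ℂ (a * p) < 1 := by rwa [mul_comm]
  refine commute_of_mul_mul_one_sub_eq_zero
    (eq_zero_of_eq_mul_mul hradius ?_) (eq_zero_of_eq_mul_mul hradius' ?_)
  · calc p * y * (1 - p) = p * (y * a) * x := by rw [← hmul]; simp only [mul_assoc]
      _ = a * (p * p) * y * x := by rw [← hay.eq, ← mul_assoc, ← hap.eq, hp.eq]
      _ = a * p * (p * y * (1 - p)) * x := by
        rw [mul_assoc (a * p), mul_assoc (p * y), hpx]; simp only [mul_assoc]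
  · calc (1 - p) * y * p = x * (a * y) * (p * p) := by
          rw [← hmul, hax.eq, hp.eq]; simp only [mul_assoc]
      _ = x * y * (p * a) * p := by rw [hay.eq, ← hap.eq]; simp only [mul_assoc]
      _ = x * (1 - p) * y * p * (a * p) := by rw [hxp]; simp only [mul_assoc]
      _ = x * ((1 - p) * y * p) * (a * p) := by simp only [mul_assoc]

end Bicommutant

section Drazin

variable {A : Type*} [NormedRing A] [NormedAlgebra ℂ A] {a b d e n : A}

theorem isQuasinilpotent_iff [CompleteSpace A] [Nontrivial A] :
    IsQuasinilpotent n ↔ ∀ μ : ℂ, μ ≠ 0 → IsUnit (n - μ • (1 : A)) := by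
  rw [IsQuasinilpotent, (spectrum.nonempty n).subset_singleton_iff.symm]
  refine forall_congr' fun μ ↦ ?_
  rw [mem_spectrum_iff_not_isUnit_sub_smul_one, Set.mem_singleton_iff, not_imp_comm]

theorem IsQuasinilpotent.nontrivial (h : IsQuasinilpotent n) : Nontrivial A := by
  by_contra htriv
  rw [not_nontrivial_iff_subsingleton] at htriv
  exact Set.singleton_ne_empty 0 (h.symm.trans (spectrum.of_subsingleton n))

theorem IsQuasinilpotent.spectralRadius_eq_zero (h : IsQuasinilpotent n) :
    spectralRadius ℂ n = 0 := by
  rw [IsQuasinilpotent] at h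
  simp [spectralRadius, h]

theorem IsQuasinilpotent.isUnit_sub_smul_one (h : IsQuasinilpotent n) {μ : ℂ} (hμ : μ ≠ 0) :
    IsUnit (n - μ • (1 : A)) := by
  by_contra hmem
  rw [← mem_spectrum_iff_not_isUnit_sub_smul_one, h] at hmem
  exact hμ hmem

theorem IsQuasinilpotent.isUnitOn_sub_smul_one {q : A} (h : IsQuasinilpotent (d * q))
    (hq : IsIdempotentElem q) (hdq : Commute d q) {μ : ℂ} (hμ : μ ≠ 0) :
    IsUnitOn (d - μ • (1 : A)) q :=
  (isUnit_mul_sub_smul_one_iff hμ hq hdq).1 (h.isUnit_sub_smul_one hμ)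

theorem IsQuasinilpotent.mul_idem [CompleteSpace A] (h : IsQuasinilpotent n)
    (he : IsIdempotentElem e) (hne : Commute n e) : IsQuasinilpotent (n * e) := by
  have := h.nontrivial
  refine isQuasinilpotent_iff.2 fun μ hμ ↦ (isUnit_mul_sub_smul_one_iff hμ he hne).2 ?_
  exact isUnitOn_of_isUnit (h.isUnit_sub_smul_one hμ) he (commute_sub_smul_one hne μ)

theorem isGDrazinInv_iff :
    IsGDrazinInv d ↔ ∃ q : A, IsIdempotentElem q ∧ Commute d q ∧ IsUnitOn d (1 - q) ∧
      IsQuasinilpotent (d * q) :=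
  exists_outer_inverse_iff_exists_idem IsQuasinilpotent

theorem isAgDrazinInv_iff :
    IsAgDrazinInv a ↔ ∃ p : A, IsIdempotentElem p ∧ Commute a p ∧ IsUnitOn a (1 - p) ∧
      MemAcc (a * p) :=
  exists_outer_inverse_iff_exists_idem MemAcc

theorem MemAcc.nontrivial (h : MemAcc b) : Nontrivial A := by
  obtain ⟨q, -, -, -, hqn⟩ := isGDrazinInv_iff.1 (h 1 one_ne_zero)
  exact hqn.nontrivial

variable [CompleteSpace A]

theorem IsGDrazinInv.exists_idem_bicommutant (h : IsGDrazinInv d) :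
    ∃ q : A, IsIdempotentElem q ∧ (∀ y, Commute d y → Commute q y) ∧ IsUnitOn d (1 - q) ∧
      IsQuasinilpotent (d * q) := by
  obtain ⟨q, hq, hdq, hunit, hqn⟩ := isGDrazinInv_iff.1 h
  obtain ⟨r, hr, -, hlarge⟩ := hunit.exists_forall_nnnorm_lt (𝕜 := ℂ)
  have hsmall : spectralRadius ℂ (d * q) < r := by
    rw [hqn.spectralRadius_eq_zero]
    exact_mod_cast hr
  exact ⟨q, hq, fun y hy ↦ commute_idem_of_spectralRadius_lt hq hdq hsmall hlarge hy, hunit, hqn⟩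

theorem IsGDrazinInv.exists_forall_isUnit_sub_smul_one (h : IsGDrazinInv d) :
    ∃ r : ℝ≥0, 0 < r ∧ ∀ μ : ℂ, μ ≠ 0 → ‖μ‖₊ < r → IsUnit (d - μ • (1 : A)) := by
  obtain ⟨q, hq, hdq, hunit, hqn⟩ := isGDrazinInv_iff.1 h
  obtain ⟨r, hr, -, hlarge⟩ := hunit.exists_forall_nnnorm_lt (𝕜 := ℂ)
  refine ⟨r, hr, fun μ hμ hμr ↦ ?_⟩
  exact (hqn.isUnitOn_sub_smul_one hq hdq hμ).isUnit (hlarge μ hμr) hq (commute_sub_smul_one hdq μ)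

theorem MemAcc.mul_idem (hb : MemAcc b) (he : IsIdempotentElem e) (hbe : Commute b e) :
    MemAcc (b * e) := by
  intro l hl
  obtain ⟨q, hq, hbicomm, hunit, hqn⟩ := (hb l hl).exists_idem_bicommutant
  have hle : Commute (b - l • (1 : A)) e := commute_sub_smul_one hbe l
  have hlq : Commute (b - l • (1 : A)) q := (hbicomm _ (Commute.refl _)).symm
  have hqe : Commute q e := hbicomm e hle
  have hbq : Commute b q := by simpa using commute_sub_smul_one hlq (-l)
  have hcomm : Commute (b * e - l • (1 : A)) e :=
    commute_sub_smul_one (hbe.mul_left (Commute.refl e)) l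
  have hcorner {c : A} (hc : Commute c e) :
      (b * e - l • (1 : A)) * (c * e) = (b - l • (1 : A)) * (c * e) :=
    mul_sub_smul_one_mul_eq (by rw [hc.eq, ← mul_assoc, he.eq]) b l
  have hqe' : Commute (1 - q) e := (Commute.one_left e).sub_left hqe
  have hunit' : IsUnitOn (b * e - l • (1 : A)) ((1 - q) * e) :=
    (isUnitOn_congr (hcorner hqe')).2 (hunit.mul_idem he hle hqe')
  refine isGDrazinInv_iff.2 ⟨q * e, hq.mul_of_commute hqe he, ?_, ?_, ?_⟩
  · exact (commute_sub_smul_one (hbq.mul_left hqe.symm) l).mul_right hcomm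
  · exact (isUnitOn_mul_sub_smul_one hl he b).one_sub_mul hunit' he hcomm hqe.symm
  · rw [hcorner hqe, ← mul_assoc]
    exact hqn.mul_idem he (hle.mul_left hqe)

theorem MemAcc.finite_spectrum_le_nnnorm (hb : MemAcc b) {r : ℝ≥0} (hr : 0 < r) :
    {l ∈ spectrum ℂ b | r ≤ ‖l‖₊}.Finite := by
  have hclosed : IsClosed {l : ℂ | r ≤ ‖l‖₊} := isClosed_le continuous_const continuous_nnnorm
  refine ((spectrum.isCompact b).inter_right hclosed).finite ?_
  refine isDiscrete_iff_forall_mem_exists_isOpen.2 fun l hl ↦ ?_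
  have hl0 : l ≠ 0 := nnnorm_pos.1 (hr.trans_le hl.2)
  obtain ⟨ε, hε, hball⟩ := (hb l hl0).exists_forall_isUnit_sub_smul_one
  refine ⟨Metric.ball l ε, Metric.isOpen_ball, Set.eq_singleton_iff_unique_mem.2
    ⟨⟨Metric.mem_ball_self hε, hl⟩, fun m hm ↦ ?_⟩⟩
  by_contra hne
  have hunit := hball (m - l) (sub_ne_zero.2 hne) (mod_cast mem_ball_iff_norm.1 hm.1)
  rw [sub_smul, sub_sub_sub_cancel_right] at hunit
  exact mem_spectrum_iff_not_isUnit_sub_smul_one.1 hm.2.1 hunit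

theorem MemAcc.exists_idem_forall_isUnitOn (hb : MemAcc b) (S : Finset ℂ) (hS : 0 ∉ S) :
    ∃ e : A, IsIdempotentElem e ∧ (∀ y, Commute b y → Commute e y) ∧
      (∀ l ∈ S, IsUnitOn (b - l • (1 : A)) e) ∧
      ∀ l ∉ S, IsUnitOn (b - l • (1 : A)) (1 - e) := by
  induction S using Finset.induction_on with
  | empty => exact ⟨1, .one, fun y _ ↦ Commute.one_left y, by simp, by simp [IsUnitOn]⟩
  | insert m S _ ih =>
    obtain ⟨hm0, hS⟩ : 0 ≠ m ∧ 0 ∉ S := by simpa using hS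
    obtain ⟨e, he, hbicomm_e, hon, hoff⟩ := ih hS
    obtain ⟨q, hq, hbicomm_q, hunit, hqn⟩ := (hb m hm0.symm).exists_idem_bicommutant
    replace hbicomm_q (y : A) (hy : Commute b y) : Commute q y :=
      hbicomm_q y (commute_sub_smul_one hy m)
    have hbe : Commute b e := (hbicomm_e b (Commute.refl b)).symm
    have hbq : Commute b q := (hbicomm_q b (Commute.refl b)).symm
    have hqe : Commute q e := hbicomm_q e hbe
    have hqe' : Commute (1 - q) e := (Commute.one_left e).sub_left hqe
    -- Multiplying by `1 - q` cuts off the corner where `b - m` is quasinilpotent.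
    refine ⟨(1 - q) * e, hq.one_sub.mul_of_commute hqe' he, fun y hy ↦ ?_, fun l hl ↦ ?_,
      fun l hl ↦ ?_⟩
    · exact ((Commute.one_left y).sub_left (hbicomm_q y hy)).mul_left (hbicomm_e y hy)
    · obtain rfl | hl := Finset.mem_insert.1 hl
      · exact hunit.mul_idem he (commute_sub_smul_one hbe l) hqe'
      · rw [hqe'.eq]
        exact (hon l hl).mul_idem hq.one_sub
          (commute_sub_smul_one ((Commute.one_right b).sub_right hbq) l) hqe'.symm
    · obtain ⟨hlm, hlS⟩ : l ≠ m ∧ l ∉ S := by simpa using hl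
      have hlq : IsUnitOn (b - l • (1 : A)) q := by
        have hshift :=
          hqn.isUnitOn_sub_smul_one hq (commute_sub_smul_one hbq m) (sub_ne_zero.2 hlm)
        rwa [sub_smul, sub_sub_sub_cancel_right] at hshift
      refine (hoff l hlS).one_sub_mul ?_ he (commute_sub_smul_one hbe l) hqe'.symm
      rw [sub_sub_cancel]
      exact hlq.mul_idem he (commute_sub_smul_one hbe l) hqe

theorem MemAcc.exists_idem_spectralRadius_lt (hb : MemAcc b) {r : ℝ≥0} (hr : 0 < r) :
    ∃ e : A, IsIdempotentElem e ∧ (∀ y, Commute b y → Commute e y) ∧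
      spectralRadius ℂ (b * e) < r ∧
      ∀ μ : ℂ, ‖μ‖₊ < r → IsUnitOn (b - μ • (1 : A)) (1 - e) := by
  have := hb.nontrivial
  have hfin := hb.finite_spectrum_le_nnnorm hr
  obtain ⟨e, he, hbicomm, hon, hoff⟩ := hb.exists_idem_forall_isUnitOn hfin.toFinset
    (by simpa using fun _ ↦ hr.ne')
  have hbe : Commute b e := (hbicomm b (Commute.refl b)).symm
  refine ⟨e, he, hbicomm, spectrum.spectralRadius_lt_of_forall_lt _ fun l hl ↦ ?_,
    fun μ hμ ↦ hoff μ (by simp [hμ])⟩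
  by_contra! hrl
  have hl0 : l ≠ 0 := nnnorm_pos.1 (hr.trans_le hrl)
  refine mem_spectrum_iff_not_isUnit_sub_smul_one.1 hl
    ((isUnit_mul_sub_smul_one_iff hl0 he hbe).2 ?_)
  by_cases hlb : l ∈ spectrum ℂ b
  · exact hon l (hfin.mem_toFinset.2 ⟨hlb, hrl⟩)
  · rw [mem_spectrum_iff_not_isUnit_sub_smul_one, not_not] at hlb
    exact isUnitOn_of_isUnit hlb he (commute_sub_smul_one hbe l)

theorem exists_idem_bicommutant_of_isUnitOn_of_memAcc {p₀ : A} (hp₀ : IsIdempotentElem p₀)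
    (hap₀ : Commute a p₀) (hunit : IsUnitOn a (1 - p₀)) (hacc : MemAcc (a * p₀)) :
    ∃ p : A, IsIdempotentElem p ∧ (∀ y, Commute a y → Commute p y) ∧ IsUnit (a + p) ∧
      MemAcc (a * p) := by
  obtain ⟨r, hr, hr1, hlarge₀⟩ := hunit.exists_forall_nnnorm_lt (𝕜 := ℂ)
  obtain ⟨e, he, hbicomm, hsmall, hlarge⟩ := hacc.exists_idem_spectralRadius_lt hr
  have hea : Commute e a := hbicomm a ((Commute.refl a).mul_left hap₀.symm)
  have hep₀ : Commute e p₀ := hbicomm p₀ (hap₀.mul_left (Commute.refl p₀))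
  have hp : IsIdempotentElem (e * p₀) := he.mul_of_commute hep₀ hp₀
  have hap : Commute a (e * p₀) := hea.symm.mul_right hap₀
  have hcorner : a * (e * p₀) = a * p₀ * e := by rw [hep₀.eq, mul_assoc]
  have hlarge' (μ : ℂ) (hμ : ‖μ‖₊ < r) : IsUnitOn (a - μ • (1 : A)) (1 - e * p₀) :=
    isUnitOn_sub_smul_one_one_sub_mul hp₀ hap₀ hep₀ (hlarge₀ μ hμ) (hlarge μ hμ)
  rw [← hcorner] at hsmall
  have hon : IsUnitOn (a + 1) (e * p₀) :=
    isUnitOn_add_one_of_spectralRadius_lt_one hp hap (hsmall.trans_le (mod_cast hr1))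
  have hoff : IsUnitOn a (1 - e * p₀) := by simpa using hlarge' 0 (by simpa using hr)
  refine ⟨e * p₀, hp, fun y ↦ commute_idem_of_spectralRadius_lt hp hap hsmall hlarge',
    (isUnit_add_idem_iff hp hap).2 ⟨hon, hoff⟩, ?_⟩
  rw [hcorner]
  exact hacc.mul_idem he (hea.symm.mul_left hep₀.symm)

end Drazin

theorem agDrazin_iff_exists_idem_bicommutant_unit {A : Type*} [NormedRing A]
    [NormedAlgebra ℂ A] [CompleteSpace A] (a : A) :
    IsAgDrazinInv a ↔
      ∃ p : A, p * p = p ∧ (∀ y : A, a * y = y * a → p * y = y * p) ∧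
        IsUnit (a + p) ∧ MemAcc (a * p) := by
  rw [isAgDrazinInv_iff]
  constructor
  · rintro ⟨p₀, hp₀, hap₀, hunit, hacc⟩
    exact exists_idem_bicommutant_of_isUnitOn_of_memAcc hp₀ hap₀ hunit hacc
  · rintro ⟨p, hp, hbicomm, hunit, hacc⟩
    have hap : Commute a p := (hbicomm a rfl).symm
    exact ⟨p, hp, hap, ((isUnit_add_idem_iff hp hap).1 hunit).2, hacc⟩
end

section
/- Let A be a complex unital Banach algebra and let a ∈ A be ag-Drazin invertible but not generalized Drazin invertible. Then the ag-Drazin inverse of a is not unique: there exist b, c ∈ A with b ≠ c such that both b and c are ag-Drazin inverses of a. -/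
open Filter Topology

/-!
If `b` is an ag-Drazin inverse of `a`, the residual `w = a - a²b` has a nonzero spectral value `l`,
for otherwise `b` would be a generalized Drazin inverse. Since `w - l` is generalized Drazin
invertible, `w` has a nonzero spectral idempotent `q` at `l`. By the double commutant property, `q`
commutes with `a` and `b`; moreover `qb = 0` and `qa = qw` agrees with `qg` for a unit `g`.
So `a = qg + (1 - q)a`, and gluing the inverses of the two pieces gives a second ag-Drazin inverse
`qg⁻¹ + (1 - q)b`, which differs from `b` because `q` does not annihilate it.
-/

section PeirceSum

variable {A : Type*} [Ring A] {p a b c d : A}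

/-- For an idempotent `p` commuting with `a` and `b`, this is the element that acts as `a` on the
corner `pA` and as `b` on the complementary corner `(1 - p)A`. -/
def peirceSum (p a b : A) : A :=
  p * a + (1 - p) * b

lemma peirceSum_self : peirceSum p a a = a := by
  rw [peirceSum, ← add_mul, add_sub_cancel, one_mul]

lemma peirceSum_sub : peirceSum p a b - peirceSum p c d = peirceSum p (a - c) (b - d) := by
  simp only [peirceSum, mul_sub]
  abel

lemma mul_peirceSum (hp : IsIdempotentElem p) : p * peirceSum p a b = p * a := by
  rw [peirceSum, mul_add, ← mul_assoc, ← mul_assoc, hp.eq, hp.mul_one_sub_self, zero_mul, add_zero]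

lemma one_sub_mul_peirceSum (hp : IsIdempotentElem p) :
    (1 - p) * peirceSum p a b = (1 - p) * b := by
  rw [peirceSum, mul_add, ← mul_assoc, ← mul_assoc, hp.one_sub_mul_self, hp.one_sub.eq, zero_mul,
    zero_add]

lemma peirceSum_mul_peirceSum (hp : IsIdempotentElem p) (hpa : Commute p a) (hpb : Commute p b) :
    peirceSum p a b * peirceSum p c d = peirceSum p (a * c) (b * d) := by
  have hpb' : Commute (1 - p) b := (Commute.one_left b).sub_left hpb
  calc peirceSum p a b * peirceSum p c d
      = a * (p * peirceSum p c d) + b * ((1 - p) * peirceSum p c d) := by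
        nth_rw 1 [peirceSum]
        rw [hpa.eq, hpb'.eq, add_mul, mul_assoc, mul_assoc]
    _ = peirceSum p (a * c) (b * d) := by
        rw [mul_peirceSum hp, one_sub_mul_peirceSum hp, ← mul_assoc, ← mul_assoc, ← hpa.eq,
          ← hpb'.eq, mul_assoc, mul_assoc, peirceSum]

lemma isUnit_peirceSum (hp : IsIdempotentElem p) (hpa : Commute p a) (hpb : Commute p b)
    (ha : IsUnit a) (hb : IsUnit b) : IsUnit (peirceSum p a b) := by
  obtain ⟨u, rfl⟩ := ha
  obtain ⟨v, rfl⟩ := hb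
  refine ⟨⟨peirceSum p u v, peirceSum p ↑u⁻¹ ↑v⁻¹, ?_, ?_⟩, rfl⟩
  · rw [peirceSum_mul_peirceSum hp hpa hpb, u.mul_inv, v.mul_inv, peirceSum_self]
  · rw [peirceSum_mul_peirceSum hp hpa.units_inv_right hpb.units_inv_right, u.inv_mul, v.inv_mul,
      peirceSum_self]

lemma spectrum_peirceSum_subset {R : Type*} [CommRing R] [Algebra R A] (hp : IsIdempotentElem p)
    (hpa : Commute p a) (hpb : Commute p b) :
    spectrum R (peirceSum p a b) ⊆ spectrum R a ∪ spectrum R b := by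
  intro r hr
  by_contra hrab
  obtain ⟨hra, hrb⟩ : IsUnit (algebraMap R A r - a) ∧ IsUnit (algebraMap R A r - b) := by
    simpa only [Set.mem_union, not_or, spectrum.notMem_iff] using hrab
  have hpr : Commute p (algebraMap R A r) := Algebra.commute_algebraMap_right r p
  have hunit := isUnit_peirceSum hp (hpr.sub_right hpa) (hpr.sub_right hpb) hra hrb
  rw [← peirceSum_sub, peirceSum_self] at hunit
  exact hr hunit

end PeirceSum

section DrazinInverseModulo

variable {A : Type*} [Ring A] {P : A → Prop} {p a b x y s : A}

/-- `x` is a commuting outer inverse of `a` whose residual `a - a²x` lies in the class `P`.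
Quasinilpotent residuals give generalized Drazin inverses and residuals in `A^acc` give ag-Drazin
inverses, in both cases by unfolding definitions. -/
def IsDrazinInverseModulo (P : A → Prop) (x a : A) : Prop :=
  a * x = x * a ∧ x * a * x = x ∧ P (a - a ^ 2 * x)

lemma commute_sub_sq_mul (hsa : Commute s a) (hsx : Commute s x) : Commute s (a - a ^ 2 * x) :=
  hsa.sub_right ((hsa.pow_right 2).mul_right hsx)

namespace IsDrazinInverseModulo

lemma units_inv (hP : P 0) (u : Aˣ) : IsDrazinInverseModulo P (↑u⁻¹ : A) u := by
  refine ⟨by simp, by simp, ?_⟩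
  simpa [pow_two, mul_assoc] using hP

lemma isIdempotentElem (h : IsDrazinInverseModulo P x a) : IsIdempotentElem (a * x) := by
  rw [IsIdempotentElem, mul_assoc, ← mul_assoc x, h.2.1]

lemma residual_eq (h : IsDrazinInverseModulo P x a) : a - a ^ 2 * x = (1 - a * x) * a := by
  rw [sub_mul, one_mul, mul_assoc, ← h.1, ← mul_assoc, pow_two]

lemma residual_mul (h : IsDrazinInverseModulo P x a) : (a - a ^ 2 * x) * x = 0 := by
  rw [h.residual_eq, mul_assoc, h.isIdempotentElem.one_sub_mul_self]

protected lemma peirceSum (hp : IsIdempotentElem p)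
    (hP : ∀ {c d : A}, Commute p c → Commute p d → P c → P d → P (peirceSum p c d))
    (hpa : Commute p a) (hpb : Commute p b) (hpx : Commute p x) (hpy : Commute p y)
    (hx : IsDrazinInverseModulo P x a) (hy : IsDrazinInverseModulo P y b) :
    IsDrazinInverseModulo P (peirceSum p x y) (peirceSum p a b) := by
  have hmul : peirceSum p x y * peirceSum p a b = peirceSum p (x * a) (y * b) :=
    peirceSum_mul_peirceSum hp hpx hpy
  refine ⟨?_, ?_, ?_⟩
  · rw [hmul, peirceSum_mul_peirceSum hp hpa hpb, hx.1, hy.1]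
  · rw [hmul, peirceSum_mul_peirceSum hp (hpx.mul_right hpa) (hpy.mul_right hpb), hx.2.1, hy.2.1]
  · rw [pow_two, peirceSum_mul_peirceSum hp hpa hpb, ← pow_two, ← pow_two,
      peirceSum_mul_peirceSum hp (hpa.pow_right 2) (hpb.pow_right 2), peirceSum_sub]
    exact hP (commute_sub_sq_mul hpa hpx) (commute_sub_sq_mul hpb hpy) hx.2.2 hy.2.2

end IsDrazinInverseModulo

end DrazinInverseModulo

section Quasinilpotent

variable {A : Type*} [NormedRing A] [NormedAlgebra ℂ A] {p a b n t y : A}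

lemma eventually_norm_pow_le_of_spectralRadius_lt [CompleteSpace A] {ε : ℝ}
    (h : spectralRadius ℂ a < ENNReal.ofReal ε) : ∀ᶠ k : ℕ in atTop, ‖a ^ k‖ ≤ ε ^ k := by
  have hε : 0 < ε := ENNReal.ofReal_pos.mp (pos_of_gt h)
  have hroot := (spectrum.pow_norm_pow_one_div_tendsto_nhds_spectralRadius a).eventually_lt_const h
  filter_upwards [hroot, eventually_ne_atTop 0] with k hk hk0
  have hk' : ‖a ^ k‖ ^ (1 / k : ℝ) < ε := (ENNReal.ofReal_lt_ofReal_iff hε).mp hk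
  calc ‖a ^ k‖ = (‖a ^ k‖ ^ (1 / k : ℝ)) ^ k := by
        rw [one_div, Real.rpow_inv_natCast_pow (norm_nonneg _) hk0]
    _ ≤ ε ^ k := by gcongr

namespace IsQuasinilpotent

lemma of_spectrum_subset [CompleteSpace A] [Nontrivial A] (h : spectrum ℂ a ⊆ {0}) :
    IsQuasinilpotent a :=
  (spectrum.nonempty a).subset_singleton_iff.mp h

lemma nontrivial_s9 (h : IsQuasinilpotent a) : Nontrivial A := by
  by_contra hA
  rw [not_nontrivial_iff_subsingleton] at hA
  exact Set.singleton_ne_empty 0 (h.symm.trans (spectrum.of_subsingleton a))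

lemma zero [Nontrivial A] : IsQuasinilpotent (0 : A) :=
  spectrum.zero_eq

lemma op (h : IsQuasinilpotent a) : IsQuasinilpotent (MulOpposite.op a) := by
  refine Eq.trans (Set.ext fun l => ?_) h
  exact not_congr (isUnit_op (m := algebraMap ℂ A l - a))

lemma spectralRadius_eq_zero_s9 (h : IsQuasinilpotent a) : spectralRadius ℂ a = 0 := by
  simp [spectralRadius, show spectrum ℂ a = {0} from h]

lemma isUnit_add_smul_one (h : IsQuasinilpotent a) {l : ℂ} (hl : l ≠ 0) :
    IsUnit (a + l • (1 : A)) := by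
  have hnotMem : -l ∉ spectrum ℂ a := by
    rw [h]
    simpa using hl
  rw [spectrum.notMem_iff, ← IsUnit.neg_iff] at hnotMem
  simpa [Algebra.algebraMap_eq_smul_one, add_comm] using hnotMem

protected lemma peirceSum [CompleteSpace A] (hp : IsIdempotentElem p) (hpa : Commute p a)
    (hpb : Commute p b) (ha : IsQuasinilpotent a) (hb : IsQuasinilpotent b) :
    IsQuasinilpotent (peirceSum p a b) := by
  have := ha.nontrivial_s9
  apply of_spectrum_subset
  calc spectrum ℂ (peirceSum p a b) ⊆ spectrum ℂ a ∪ spectrum ℂ b :=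
        spectrum_peirceSum_subset hp hpa hpb
    _ = {0} := by rw [ha, hb, Set.union_self]

lemma eq_zero_of_eq_mul_mul [CompleteSpace A] (hn : IsQuasinilpotent n) (ht : t = n * t * y) :
    t = 0 := by
  have hiterate (k : ℕ) : t = n ^ k * t * y ^ k := by
    induction k with
    | zero => simp
    | succ k ih =>
      calc t = n ^ k * (n * t * y) * y ^ k := by rw [← ht, ← ih]
        _ = n ^ (k + 1) * t * y ^ (k + 1) := by simp only [pow_succ n, pow_succ' y, mul_assoc]
  set ε : ℝ := (‖y‖ + 1)⁻¹
  have hεy : ε * ‖y‖ < 1 := by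
    rw [inv_mul_lt_one₀ (by positivity)]
    exact lt_add_one _
  have hradius : spectralRadius ℂ n < ENNReal.ofReal ε := by
    rw [hn.spectralRadius_eq_zero_s9, ENNReal.ofReal_pos]
    positivity
  obtain ⟨k, hk, hk0⟩ :=
    ((eventually_norm_pow_le_of_spectralRadius_lt hradius).and (eventually_gt_atTop 0)).exists
  by_contra ht0
  have hpow : (ε * ‖y‖) ^ k < 1 := pow_lt_one₀ (by positivity) hεy hk0.ne'
  have : ‖t‖ < ‖t‖ :=
    calc ‖t‖ = ‖n ^ k * t * y ^ k‖ := by rw [← hiterate k]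
      _ ≤ ‖n ^ k‖ * ‖t‖ * ‖y ^ k‖ := norm_mul₃_le
      _ ≤ ε ^ k * ‖t‖ * ‖y‖ ^ k := by
        gcongr
        exact norm_pow_le' y hk0
      _ = (ε * ‖y‖) ^ k * ‖t‖ := by rw [mul_pow, mul_right_comm]
      _ < ‖t‖ := mul_lt_of_lt_one_left (norm_pos_iff.mpr ht0) hpow
  exact this.false

end IsQuasinilpotent

end Quasinilpotent

section GDrazinInverse

variable {A : Type*} [NormedRing A] [NormedAlgebra ℂ A] {p a b x s w : A}

lemma IsDrazinInverseModulo.op (h : IsDrazinInverseModulo IsQuasinilpotent x a) :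
    IsDrazinInverseModulo IsQuasinilpotent (MulOpposite.op x) (MulOpposite.op a) := by
  refine ⟨congrArg MulOpposite.op h.1.symm, ?_, ?_⟩
  · rw [← MulOpposite.op_mul, ← MulOpposite.op_mul, ← mul_assoc, h.2.1]
  · have hax : Commute (a ^ 2) x := Commute.pow_left h.1 2
    rw [← MulOpposite.op_pow, ← MulOpposite.op_mul, ← MulOpposite.op_sub, ← hax.eq]
    exact h.2.2.op

lemma IsDrazinInverseModulo.one_sub_mul_mul_eq_zero [CompleteSpace A]
    (h : IsDrazinInverseModulo IsQuasinilpotent x a) (hsa : Commute s a) :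
    (1 - a * x) * s * (a * x) = 0 := by
  refine h.2.2.eq_zero_of_eq_mul_mul (y := x) ?_
  have hae : Commute a (1 - a * x) :=
    (Commute.one_right a).sub_right ((Commute.refl a).mul_right h.1)
  have hidem := h.isIdempotentElem.one_sub.eq
  have hexx : a * x * x = x := by rw [h.1, h.2.1]
  symm
  calc (a - a ^ 2 * x) * ((1 - a * x) * s * (a * x)) * x
      = (1 - a * x) * (a * (1 - a * x)) * s * (a * x * x) := by
        rw [h.residual_eq]
        simp only [mul_assoc]
    _ = (1 - a * x) * (1 - a * x) * (a * s) * x := by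
        rw [hae.eq, hexx]
        simp only [mul_assoc]
    _ = (1 - a * x) * s * (a * x) := by
        rw [hidem, ← hsa.eq]
        simp only [mul_assoc]

lemma IsDrazinInverseModulo.commute_mul [CompleteSpace A]
    (h : IsDrazinInverseModulo IsQuasinilpotent x a) (hsa : Commute s a) : Commute s (a * x) := by
  have hleft : s * (a * x) = a * x * s * (a * x) := by
    simpa only [sub_mul, one_mul, sub_eq_zero] using h.one_sub_mul_mul_eq_zero hsa
  have hright : a * x * s = a * x * s * (a * x) := by
    have hop := congrArg MulOpposite.unop (h.op.one_sub_mul_mul_eq_zero hsa.op)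
    simpa [mul_sub, sub_eq_zero, ← h.1, mul_assoc] using hop
  exact hleft.trans hright.symm

lemma IsDrazinInverseModulo.commute [CompleteSpace A]
    (h : IsDrazinInverseModulo IsQuasinilpotent x a) (hsa : Commute s a) : Commute s x := by
  have hse := h.commute_mul hsa
  calc s * x = s * (a * x) * x := by rw [mul_assoc, h.1, h.2.1]
    _ = x * (a * s) * x := by rw [hse.eq, h.1, mul_assoc x]
    _ = x * (s * (a * x)) := by rw [← hsa.eq]; simp only [mul_assoc]
    _ = x * a * x * s := by rw [hse.eq]; simp only [mul_assoc]
    _ = x * s := by rw [h.2.1]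

lemma IsGDrazinInv.of_isUnit [Nontrivial A] (ha : IsUnit a) : IsGDrazinInv a := by
  obtain ⟨u, rfl⟩ := ha
  exact ⟨_, IsDrazinInverseModulo.units_inv .zero u⟩

protected lemma IsGDrazinInv.peirceSum [CompleteSpace A] (hp : IsIdempotentElem p)
    (hpa : Commute p a) (hpb : Commute p b) (ha : IsGDrazinInv a) (hb : IsGDrazinInv b) :
    IsGDrazinInv (peirceSum p a b) := by
  obtain ⟨x, hx : IsDrazinInverseModulo IsQuasinilpotent x a⟩ := ha
  obtain ⟨y, hy : IsDrazinInverseModulo IsQuasinilpotent y b⟩ := hb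
  exact ⟨_, IsDrazinInverseModulo.peirceSum hp (.peirceSum hp) hpa hpb (hx.commute hpa)
    (hy.commute hpb) hx hy⟩

lemma MemAcc.nontrivial_s9 (ha : MemAcc a) : Nontrivial A := by
  obtain ⟨_, -, -, hquasi⟩ := ha 1 one_ne_zero
  exact hquasi.nontrivial_s9

lemma MemAcc.zero [Nontrivial A] : MemAcc (0 : A) := by
  intro l hl
  rw [zero_sub]
  exact .of_isUnit (isUnit_one.smul (Units.mk0 l hl)).neg

protected lemma MemAcc.peirceSum [CompleteSpace A] (hp : IsIdempotentElem p) (hpa : Commute p a)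
    (hpb : Commute p b) (ha : MemAcc a) (hb : MemAcc b) : MemAcc (peirceSum p a b) := by
  intro l hl
  have hpl : Commute p (l • (1 : A)) := (Commute.one_right p).smul_right l
  rw [← peirceSum_self (p := p) (a := l • (1 : A)), peirceSum_sub]
  exact .peirceSum hp (hpa.sub_right hpl) (hpb.sub_right hpl) (ha l hl) (hb l hl)

lemma exists_spectral_idempotent_and_unit [CompleteSpace A] {l : ℂ} (hl : l ∈ spectrum ℂ w)
    (hl0 : l ≠ 0) (hw : IsGDrazinInv (w - l • (1 : A))) :
    ∃ (q : A) (g : Aˣ), IsIdempotentElem q ∧ q ≠ 0 ∧ (∀ s, Commute s w → Commute q s) ∧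
      Commute q g ∧ q * g = q * w := by
  obtain ⟨x, hx⟩ := hw
  set u := w - l • (1 : A) with hu
  replace hx : IsDrazinInverseModulo IsQuasinilpotent x u := hx
  have hcomm_u (s : A) (hs : Commute s w) : Commute s u :=
    hs.sub_right ((Commute.one_right s).smul_right l)
  have hcomm (s : A) (hs : Commute s w) : Commute (1 - u * x) s :=
    (Commute.one_left s).sub_left (hx.commute_mul (hcomm_u s hs)).symm
  have hidem : IsIdempotentElem (1 - u * x) := hx.isIdempotentElem.one_sub
  -- On the corner `(1 - ux)A` the residual of `u` is `u` itself, so shifting it by `l` gives `w`.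
  obtain ⟨g, hg⟩ := hx.2.2.isUnit_add_smul_one hl0
  rw [hx.residual_eq] at hg
  have hqu : Commute (1 - u * x) u := hcomm_u _ (hcomm w (Commute.refl w))
  refine ⟨1 - u * x, g, hidem, fun hq => spectrum.notMem_iff.mpr ?_ hl, hcomm, ?_, ?_⟩
  · have hux : u * x = 1 := (sub_eq_zero.mp hq).symm
    have hunit : IsUnit u := ⟨⟨u, x, hux, hx.1 ▸ hux⟩, rfl⟩
    simpa [hu, Algebra.algebraMap_eq_smul_one] using hunit.neg
  · rw [hg]
    exact ((Commute.refl _).mul_right hqu).add_right ((Commute.one_right _).smul_right l)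
  · rw [hg, mul_add, ← mul_assoc, hidem.eq, ← mul_add, hu, sub_add_cancel]

end GDrazinInverse

theorem agDrazinInverse_not_unique {A : Type*} [NormedRing A] [NormedAlgebra ℂ A]
    [CompleteSpace A] (a : A) (ha : IsAgDrazinInv a) (hnd : ¬ IsGDrazinInv a) :
    ∃ b c : A, b ≠ c ∧ IsAgDrazinInverseOf b a ∧ IsAgDrazinInverseOf c a := by
  obtain ⟨b, hb : IsDrazinInverseModulo MemAcc b a⟩ := ha
  have := hb.2.2.nontrivial_s9
  obtain ⟨l, hl, hl0⟩ : ∃ l ∈ spectrum ℂ (a - a ^ 2 * b), l ≠ 0 := by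
    by_contra! h
    exact hnd ⟨b, hb.1, hb.2.1, .of_spectrum_subset h⟩
  obtain ⟨q, g, hq, hq0, hcomm, hqg, hqgw⟩ :=
    exists_spectral_idempotent_and_unit hl hl0 (hb.2.2 l hl0)
  have hqa : Commute q a := hcomm a (commute_sub_sq_mul (Commute.refl a) hb.1)
  have hqb : Commute q b := hcomm b (commute_sub_sq_mul (Commute.symm hb.1) (Commute.refl b))
  have hqb0 : q * b = 0 := by
    rw [← g.mul_right_eq_zero, ← mul_assoc, ← hqg.eq, hqgw, mul_assoc, hb.residual_mul, mul_zero]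
  have hqga : q * g = q * a := by
    rw [hqgw, hb.residual_eq, hb.1, sub_mul, one_mul, mul_sub, mul_assoc b, ← mul_assoc q, hqb0,
      zero_mul, sub_zero]
  have ha_eq : peirceSum q g a = a := by rw [peirceSum, hqga, ← peirceSum, peirceSum_self]
  refine ⟨b, peirceSum q ↑g⁻¹ b, fun hbc => hq0 ?_, hb, ?_⟩
  · rw [← g⁻¹.mul_left_eq_zero, ← mul_peirceSum hq, ← hbc, hqb0]
  · have hc := IsDrazinInverseModulo.peirceSum hq (.peirceSum hq) hqg hqa hqg.units_inv_right hqb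
      (.units_inv .zero g) hb
    rwa [ha_eq] at hc
end
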